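/- Let m ≥ 1, let k ∈ Sp_{2m} ∩ O_{2m}, and let x, y ∈ SH_m. Then ⟨log(φ(k[x]) φ(k[x])ᵀ), log(φ(k[y]) φ(k[y])ᵀ)⟩ = ⟨log(φ(x) φ(x)ᵀ), log(φ(y) φ(y)ᵀ)⟩, where ⟨·,·⟩ is the Frobenius inner product and k[·] is the symplectic Möbius action; i.e., the inner product ⟨x,y⟩_S = ⟨log(φ(x)φ(x)ᵀ), log(φ(y)φ(y)ᵀ)⟩ on SH_m is invariant under the action of the stabilizer K = Sp_{2m} ∩ O_{2m}. (Second part of Proposition 1.) -/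

import Mathlib

open Matrix

/-- Membership in the real symplectic group Sp_{2m}, in block form. -/
def inSp {m : ℕ} (s : Matrix (Fin m ⊕ Fin m) (Fin m ⊕ Fin m) ℝ) : Prop :=
  s.toBlocks₁₁ * s.toBlocks₁₂ᵀ = s.toBlocks₁₂ * s.toBlocks₁₁ᵀ ∧
  s.toBlocks₂₁ * s.toBlocks₂₂ᵀ = s.toBlocks₂₂ * s.toBlocks₂₁ᵀ ∧
  s.toBlocks₁₁ * s.toBlocks₂₂ᵀ - s.toBlocks₁₂ * s.toBlocks₂₁ᵀ = 1

/-- The symplectic Möbius action s[x] = (a x + b)(c x + d)⁻¹. -/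
noncomputable def mobius {m : ℕ} (s : Matrix (Fin m ⊕ Fin m) (Fin m ⊕ Fin m) ℝ)
    (x : Matrix (Fin m) (Fin m) ℂ) : Matrix (Fin m) (Fin m) ℂ :=
  (s.toBlocks₁₁.map ((↑) : ℝ → ℂ) * x + s.toBlocks₁₂.map ((↑) : ℝ → ℂ)) *
  (s.toBlocks₂₁.map ((↑) : ℝ → ℂ) * x + s.toBlocks₂₂.map ((↑) : ℝ → ℂ))⁻¹

/-- The representative φ(u + iv) = [[r, u r⁻¹], [0, r⁻¹]], where r = v^{1/2}. -/
noncomputable def phiBlk {m : ℕ} (u r : Matrix (Fin m) (Fin m) ℝ) :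
    Matrix (Fin m ⊕ Fin m) (Fin m ⊕ Fin m) ℝ :=
  Matrix.fromBlocks r (u * r⁻¹) 0 r⁻¹

/-- The Frobenius inner product ⟨A,B⟩ = Tr(AᵀB). -/
noncomputable def frobInner {n : Type*} [Fintype n] (A B : Matrix n n ℝ) : ℝ :=
  Matrix.trace (Aᵀ * B)

/-!
The point `i = i·1` of `SH_m` is sent to `x` by the symplectic matrix `φ(x)`. For `k` symplectic,
both `k φ(x)` and `φ(k[x])` send `i` to `k[x]`, so they differ by a factor in the stabilizer of
`i`. That stabilizer consists of the symplectic matrices commuting with `J`, which are orthogonal,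
so the factor disappears from the Gram matrix: `φ(k[x]) φ(k[x])ᵀ = k (φ(x) φ(x)ᵀ) kᵀ`. When `k`
is also orthogonal, the logarithm commutes with this conjugation and the Frobenius inner product
is invariant under it.
-/

section Frobenius

variable {n : Type*} [Fintype n] [DecidableEq n]

theorem frobInner_conj_of_orthogonal {k : Matrix n n ℝ} (hk : kᵀ * k = 1) (A B : Matrix n n ℝ) :
    frobInner (k * A * kᵀ) (k * B * kᵀ) = frobInner A B := by
  have cancel (M : Matrix n n ℝ) : kᵀ * (k * M) = M := by rw [← Matrix.mul_assoc, hk, one_mul]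
  simp only [frobInner, transpose_mul, transpose_transpose, Matrix.mul_assoc, cancel]
  rw [trace_mul_comm]
  simp only [Matrix.mul_assoc, hk, mul_one]

open scoped Matrix.Norms.L2Operator in
theorem exp_injOn_isSymm :
    Set.InjOn NormedSpace.exp {A : Matrix n n ℝ | A.IsSymm} := fun A hA B hB h => by
  rw [← CFC.log_exp A (isHermitian_iff_isSymm.mpr hA).isSelfAdjoint, h,
    CFC.log_exp B (isHermitian_iff_isSymm.mpr hB).isSelfAdjoint]

theorem eq_conj_of_exp_eq_conj {k L L' : Matrix n n ℝ} (hk : kᵀ * k = 1) (hL : L.IsSymm)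
    (hL' : L'.IsSymm) (h : NormedSpace.exp L' = k * NormedSpace.exp L * kᵀ) :
    L' = k * L * kᵀ := by
  have hk_inv : k⁻¹ = kᵀ := inv_eq_left_inv hk
  have hk_unit : IsUnit k := .of_mul_eq_one_right _ hk
  have hconj_symm : (k * L * kᵀ).IsSymm := by
    simp only [IsSymm, transpose_mul, transpose_transpose, hL.eq, Matrix.mul_assoc]
  refine exp_injOn_isSymm hL' hconj_symm ?_
  rw [h, ← hk_inv, exp_conj _ _ hk_unit]

end Frobenius

section Symplectic

variable {l R : Type*} [Fintype l] [DecidableEq l] [CommRing R]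

theorem mul_transpose_eq_one_of_commute_J {A : Matrix (l ⊕ l) (l ⊕ l) R}
    (hA : A ∈ symplecticGroup l R) (hAJ : Commute A (J l R)) : A * Aᵀ = 1 := by
  have hJ : IsUnit (J l R) := (isUnit_iff_isUnit_det _).mpr (isUnit_det_J l R)
  apply hJ.mul_left_cancel
  rw [← Matrix.mul_assoc, ← hAJ.eq, SymplecticGroup.mem_iff.mp hA, mul_one]

theorem mem_symplecticGroup_of_mul_mem {A B : Matrix (l ⊕ l) (l ⊕ l) R}
    (hA : A ∈ symplecticGroup l R) (hAB : A * B ∈ symplecticGroup l R) :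
    B ∈ symplecticGroup l R := by
  rw [SymplecticGroup.mem_iff'] at hA hAB ⊢
  calc Bᵀ * J l R * B = Bᵀ * (Aᵀ * J l R * A) * B := by rw [hA]
    _ = (A * B)ᵀ * J l R * (A * B) := by simp only [transpose_mul, Matrix.mul_assoc]
    _ = J l R := hAB

theorem commute_fromBlocks_neg_J (A B : Matrix l l R) :
    Commute (fromBlocks A (-B) B A) (J l R) := by
  simp [commute_iff_eq, J, fromBlocks_multiply]

theorem fromBlocks_mem_symplecticGroup_iff_rows {A B C D : Matrix l l R} :
    fromBlocks A B C D ∈ symplecticGroup l R ↔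
      A * Bᵀ = B * Aᵀ ∧ C * Dᵀ = D * Cᵀ ∧ A * Dᵀ - B * Cᵀ = 1 := by
  rw [← SymplecticGroup.transpose_mem_iff, fromBlocks_transpose,
    SymplecticGroup.fromBlocks_mem_iff]
  simp only [transpose_transpose]

theorem inSp_iff_mem_symplecticGroup {m : ℕ} {s : Matrix (Fin m ⊕ Fin m) (Fin m ⊕ Fin m) ℝ} :
    inSp s ↔ s ∈ symplecticGroup (Fin m) ℝ := by
  rw [← fromBlocks_toBlocks s, fromBlocks_mem_symplecticGroup_iff_rows]
  rfl

end Symplectic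

section ComplexMatrix

/-- The complex matrix `u + i v` with real part `u` and imaginary part `v`. -/
noncomputable def matrixOfReIm {p q : Type*} (u v : Matrix p q ℝ) : Matrix p q ℂ :=
  u.map ((↑) : ℝ → ℂ) + Complex.I • v.map ((↑) : ℝ → ℂ)

variable {p q s : Type*}

theorem matrixOfReIm_apply (u v : Matrix p q ℝ) (i : p) (j : q) :
    matrixOfReIm u v i j = ⟨u i j, v i j⟩ := by
  apply Complex.ext <;> simp [matrixOfReIm]

theorem matrixOfReIm_inj {u v u' v' : Matrix p q ℝ} :
    matrixOfReIm u v = matrixOfReIm u' v' ↔ u = u' ∧ v = v' := by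
  simp only [← Matrix.ext_iff, matrixOfReIm_apply, Complex.mk.injEq, forall_and]

theorem matrixOfReIm_zero_right (u : Matrix p q ℝ) :
    matrixOfReIm u 0 = u.map ((↑) : ℝ → ℂ) := by
  simp [matrixOfReIm]

theorem matrixOfReIm_add (u v u' v' : Matrix p q ℝ) :
    matrixOfReIm u v + matrixOfReIm u' v' = matrixOfReIm (u + u') (v + v') := by
  ext i j
  apply Complex.ext <;> simp [matrixOfReIm_apply]

theorem matrixOfReIm_mul [Fintype q] (u v : Matrix p q ℝ) (u' v' : Matrix q s ℝ) :
    matrixOfReIm u v * matrixOfReIm u' v' =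
      matrixOfReIm (u * u' - v * v') (u * v' + v * u') := by
  ext i j
  apply Complex.ext <;>
    simp [Matrix.mul_apply, matrixOfReIm_apply, Finset.sum_sub_distrib, Finset.sum_add_distrib]

theorem conjTranspose_matrixOfReIm (u v : Matrix p q ℝ) :
    (matrixOfReIm u v)ᴴ = matrixOfReIm uᵀ (-vᵀ) := by
  ext i j
  apply Complex.ext <;> simp [matrixOfReIm_apply]

theorem isUnit_matrixOfReIm_zero_right [Fintype p] [DecidableEq p] {u : Matrix p p ℝ}
    (hu : IsUnit u) : IsUnit (matrixOfReIm u 0) := by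
  rw [matrixOfReIm_zero_right]
  exact hu.map Complex.ofRealHom.mapMatrix

end ComplexMatrix

section Denominator

variable {l : Type*} [Fintype l] [DecidableEq l] {a b c d : Matrix l l ℝ}

theorem posDef_gram_lower_row_of_mem_symplecticGroup
    (hg : fromBlocks a b c d ∈ symplecticGroup l ℝ) : (c * cᵀ + d * dᵀ).PosDef := by
  have hg_unit := (isUnit_iff_isUnit_det _).mpr (SymplecticGroup.symplectic_det hg)
  have hgram := (PosDef.mul_conjTranspose_self _ (vecMul_injective_of_isUnit hg_unit)).submatrix
    (Sum.inr_injective (α := l))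
  rwa [conjTranspose_eq_transpose_of_trivial, fromBlocks_transpose, fromBlocks_multiply] at hgram

-- `c i + d` is the denominator of the Möbius action at `i`; its product with its adjoint is real.
theorem isUnit_matrixOfReIm_lower_row_of_mem_symplecticGroup
    (hg : fromBlocks a b c d ∈ symplecticGroup l ℝ) : IsUnit (matrixOfReIm d c) := by
  have hcd : c * dᵀ = d * cᵀ := (fromBlocks_mem_symplecticGroup_iff_rows.mp hg).2.1
  have hnorm : matrixOfReIm d c * (matrixOfReIm d c)ᴴ = matrixOfReIm (c * cᵀ + d * dᵀ) 0 := by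
    rw [conjTranspose_matrixOfReIm, matrixOfReIm_mul, matrixOfReIm_inj]
    constructor
    · rw [Matrix.mul_neg, sub_neg_eq_add, add_comm]
    · rw [Matrix.mul_neg, hcd, neg_add_cancel]
  have hunit := isUnit_matrixOfReIm_zero_right
    (posDef_gram_lower_row_of_mem_symplecticGroup hg).isUnit
  rw [← hnorm] at hunit
  exact isUnit_of_mul_isUnit_left hunit

end Denominator

section Mobius

variable {m : ℕ} {a b c d u v r : Matrix (Fin m) (Fin m) ℝ}
  {k g : Matrix (Fin m ⊕ Fin m) (Fin m ⊕ Fin m) ℝ}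

theorem mobius_fromBlocks_matrixOfReIm :
    mobius (fromBlocks a b c d) (matrixOfReIm u v) =
      matrixOfReIm (a * u + b) (a * v) * (matrixOfReIm (c * u + d) (c * v))⁻¹ := by
  simp only [mobius, toBlocks_fromBlocks₁₁, toBlocks_fromBlocks₁₂, toBlocks_fromBlocks₂₁,
    toBlocks_fromBlocks₂₂, ← matrixOfReIm_zero_right, matrixOfReIm_mul, matrixOfReIm_add,
    Matrix.zero_mul, sub_zero, add_zero]

theorem mobius_mul_phiBlk_I (hr : IsUnit r) :
    mobius (k * phiBlk u r) (matrixOfReIm 0 1) = mobius k (matrixOfReIm u (r * r)) := by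
  obtain ⟨a, b, c, d, rfl⟩ : ∃ a b c d, k = fromBlocks a b c d :=
    ⟨_, _, _, _, (fromBlocks_toBlocks k).symm⟩
  have hr_det := (isUnit_iff_isUnit_det _).mp hr
  have hR := (isUnit_iff_isUnit_det _).mp (isUnit_matrixOfReIm_zero_right hr)
  have row (e f : Matrix (Fin m) (Fin m) ℝ) :
      matrixOfReIm (e * u + f) (e * (r * r)) =
        matrixOfReIm (e * (u * r⁻¹) + f * r⁻¹) (e * r) * matrixOfReIm r 0 := by
    rw [matrixOfReIm_mul, matrixOfReIm_inj]
    simp [Matrix.add_mul, Matrix.mul_assoc, nonsing_inv_mul _ hr_det]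
  rw [mobius_fromBlocks_matrixOfReIm, row, row, Matrix.mul_inv_rev, ← Matrix.mul_assoc,
    mul_nonsing_inv_cancel_right _ _ hR, phiBlk, fromBlocks_multiply,
    mobius_fromBlocks_matrixOfReIm]
  simp only [mul_zero, mul_one, add_zero, zero_add]

theorem eq_phiBlk_mul_of_mobius_I_eq (hr : IsUnit r)
    (hg : fromBlocks a b c d ∈ symplecticGroup (Fin m) ℝ)
    (h : mobius (fromBlocks a b c d) (matrixOfReIm 0 1) = matrixOfReIm u (r * r)) :
    fromBlocks a b c d = phiBlk u r * fromBlocks (r * d) (-(r * c)) (r * c) (r * d) := by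
  have hr_det := (isUnit_iff_isUnit_det _).mp hr
  have hW := (isUnit_iff_isUnit_det _).mp (isUnit_matrixOfReIm_lower_row_of_mem_symplecticGroup hg)
  have hcleared : matrixOfReIm b a = matrixOfReIm u (r * r) * matrixOfReIm d c := by
    rw [← h, mobius_fromBlocks_matrixOfReIm]
    simp [nonsing_inv_mul_cancel_right _ _ hW]
  rw [matrixOfReIm_mul, matrixOfReIm_inj] at hcleared
  obtain ⟨hb, ha⟩ := hcleared
  have cancel (M : Matrix (Fin m) (Fin m) ℝ) : r⁻¹ * (r * M) = M :=
    nonsing_inv_mul_cancel_left _ _ hr_det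
  simp only [phiBlk, fromBlocks_multiply, Matrix.mul_assoc, cancel, mul_neg, zero_mul, zero_add,
    neg_zero, fromBlocks_inj, and_true]
  constructor
  · rw [ha, add_comm, Matrix.mul_assoc]
  · rw [hb, sub_eq_neg_add, Matrix.mul_assoc]

theorem phiBlk_mem_symplecticGroup (hu : u.IsSymm) (hr : r.IsSymm) (hr_unit : IsUnit r) :
    phiBlk u r ∈ symplecticGroup (Fin m) ℝ := by
  have hr_det := (isUnit_iff_isUnit_det _).mp hr_unit
  rw [← inSp_iff_mem_symplecticGroup]
  simp [inSp, phiBlk, transpose_nonsing_inv, hu.eq, hr.eq, Matrix.mul_assoc,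
    mul_nonsing_inv_cancel_left _ _ hr_det, nonsing_inv_mul _ hr_det, mul_nonsing_inv _ hr_det]

theorem gram_eq_of_mobius_I_eq (hg : g ∈ symplecticGroup (Fin m) ℝ) (hu : u.IsSymm)
    (hr : r.IsSymm) (hr_unit : IsUnit r)
    (h : mobius g (matrixOfReIm 0 1) = matrixOfReIm u (r * r)) :
    g * gᵀ = phiBlk u r * (phiBlk u r)ᵀ := by
  obtain ⟨a, b, c, d, rfl⟩ : ∃ a b c d, g = fromBlocks a b c d :=
    ⟨_, _, _, _, (fromBlocks_toBlocks g).symm⟩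
  set f := fromBlocks (r * d) (-(r * c)) (r * c) (r * d)
  have hφ := phiBlk_mem_symplecticGroup hu hr hr_unit
  have hg_eq := eq_phiBlk_mul_of_mobius_I_eq hr_unit hg h
  have hf : f ∈ symplecticGroup (Fin m) ℝ :=
    mem_symplecticGroup_of_mul_mem hφ (hg_eq ▸ hg)
  have hf_orth : f * fᵀ = 1 := mul_transpose_eq_one_of_commute_J hf (commute_fromBlocks_neg_J _ _)
  rw [hg_eq, transpose_mul, Matrix.mul_assoc, ← Matrix.mul_assoc f, hf_orth, one_mul]

theorem phiBlk_gram_of_mobius_eq {u₁ r₁ : Matrix (Fin m) (Fin m) ℝ}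
    (hk : k ∈ symplecticGroup (Fin m) ℝ) (hu : u.IsSymm) (hr : r.IsSymm) (hr_unit : IsUnit r)
    (hu₁ : u₁.IsSymm) (hr₁ : r₁.IsSymm) (hr₁_unit : IsUnit r₁)
    (h : mobius k (matrixOfReIm u (r * r)) = matrixOfReIm u₁ (r₁ * r₁)) :
    phiBlk u₁ r₁ * (phiBlk u₁ r₁)ᵀ = k * (phiBlk u r * (phiBlk u r)ᵀ) * kᵀ := by
  rw [← mobius_mul_phiBlk_I hr_unit] at h
  rw [← gram_eq_of_mobius_I_eq (mul_mem hk (phiBlk_mem_symplecticGroup hu hr hr_unit)) hu₁ hr₁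
    hr₁_unit h]
  simp only [transpose_mul, Matrix.mul_assoc]

end Mobius

/-- second part of Proposition 1: the inner product
⟨x,y⟩_S = ⟨log(φ(x)φ(x)ᵀ), log(φ(y)φ(y)ᵀ)⟩ on SH_m is invariant under the
action of the stabilizer K = Sp_{2m} ∩ O_{2m}. -/
theorem inner_product_K_invariance (m : ℕ) (hm : 1 ≤ m)
    (k : Matrix (Fin m ⊕ Fin m) (Fin m ⊕ Fin m) ℝ)
    (hk : inSp k ∧ kᵀ * k = 1)
    (u v u' v' : Matrix (Fin m) (Fin m) ℝ)
    (hu : uᵀ = u) (hv : v.PosDef) (hu' : u'ᵀ = u') (hv' : v'.PosDef)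
    (x y : Matrix (Fin m) (Fin m) ℂ)
    (hx : x = u.map ((↑) : ℝ → ℂ) + Complex.I • v.map ((↑) : ℝ → ℂ))
    (hy : y = u'.map ((↑) : ℝ → ℂ) + Complex.I • v'.map ((↑) : ℝ → ℂ))
    (r r' : Matrix (Fin m) (Fin m) ℝ)
    (hr : r.PosDef ∧ r * r = v) (hr' : r'.PosDef ∧ r' * r' = v')
    (u₁ v₁ u₂ v₂ : Matrix (Fin m) (Fin m) ℝ)
    (hu₁ : u₁ᵀ = u₁) (hv₁ : v₁.PosDef) (hu₂ : u₂ᵀ = u₂) (hv₂ : v₂.PosDef)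
    (hkx : mobius k x = u₁.map ((↑) : ℝ → ℂ) + Complex.I • v₁.map ((↑) : ℝ → ℂ))
    (hky : mobius k y = u₂.map ((↑) : ℝ → ℂ) + Complex.I • v₂.map ((↑) : ℝ → ℂ))
    (r₁ r₂ : Matrix (Fin m) (Fin m) ℝ)
    (hr₁ : r₁.PosDef ∧ r₁ * r₁ = v₁) (hr₂ : r₂.PosDef ∧ r₂ * r₂ = v₂)
    (Lx Ly L₁ L₂ : Matrix (Fin m ⊕ Fin m) (Fin m ⊕ Fin m) ℝ)
    (hLx : Lxᵀ = Lx ∧ NormedSpace.exp Lx = phiBlk u r * (phiBlk u r)ᵀ)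
    (hLy : Lyᵀ = Ly ∧ NormedSpace.exp Ly = phiBlk u' r' * (phiBlk u' r')ᵀ)
    (hL₁ : L₁ᵀ = L₁ ∧ NormedSpace.exp L₁ = phiBlk u₁ r₁ * (phiBlk u₁ r₁)ᵀ)
    (hL₂ : L₂ᵀ = L₂ ∧ NormedSpace.exp L₂ = phiBlk u₂ r₂ * (phiBlk u₂ r₂)ᵀ) :
    frobInner L₁ L₂ = frobInner Lx Ly := by
  obtain ⟨hk_sp, hk_orth⟩ := hk
  rw [inSp_iff_mem_symplecticGroup] at hk_sp
  subst hx hy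
  obtain ⟨hr, rfl⟩ := hr
  obtain ⟨hr', rfl⟩ := hr'
  obtain ⟨hr₁, rfl⟩ := hr₁
  obtain ⟨hr₂, rfl⟩ := hr₂
  have isSymm {s : Matrix (Fin m) (Fin m) ℝ} (hs : s.PosDef) : s.IsSymm :=
    isHermitian_iff_isSymm.mp hs.isHermitian
  have gram₁ := phiBlk_gram_of_mobius_eq hk_sp hu (isSymm hr) hr.isUnit hu₁ (isSymm hr₁)
    hr₁.isUnit hkx
  have gram₂ := phiBlk_gram_of_mobius_eq hk_sp hu' (isSymm hr') hr'.isUnit hu₂ (isSymm hr₂)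
    hr₂.isUnit hky
  rw [← hLx.2, ← hL₁.2] at gram₁
  rw [← hLy.2, ← hL₂.2] at gram₂
  rw [eq_conj_of_exp_eq_conj hk_orth hLx.1 hL₁.1 gram₁,
    eq_conj_of_exp_eq_conj hk_orth hLy.1 hL₂.1 gram₂, frobInner_conj_of_orthogonal hk_orth]
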